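/- arXiv:1602.05940 — 3 statements merged into one kernel-verified Lean document; each statement's English description precedes it below -/
import Mathlib

section
/- Let A be an OCA over a nonempty finite alphabet Σ such that L_vis(A) ⊆ Enc_Σ. Then L_vis(A) = {enc(w) : w ∈ L_obs(A)}; equivalently, L_obs(A) = {w ∈ (Σ×ℕ)* : enc(w) ∈ L_vis(A)}. -/
/-! Common framework: one-counter automata (OCAs) over a finite alphabet,
with the classical (`oca`), visibly (`vis`) and observability (`obs`) semantics. -/

/-- Letters from an alphabet `α` together with the two counter operations
`inc` and `dec`. -/
inductive Vis (α : Type*) : Type _ where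
  | sym : α → Vis α
  | inc : Vis α
  | dec : Vis α

/-- A one-counter automaton (an `m`-OCA) over alphabet `α` with state set `Q`:
an initial state, a set of final states, a threshold `m`, and a transition
relation `Δ ⊆ Q × {0,…,m} × (α ∪ {inc,dec}) × Q`. -/
structure OCA (Q : Type*) (α : Type*) where
  init : Q
  final : Set Q
  m : ℕ
  Δ : Set (Q × ℕ × Vis α × Q)
  valid : ∀ t ∈ Δ, t.2.1 ≤ m

variable {Q α : Type*}

/-- One step of an OCA, labeled by an element of `(α × ℕ) ∪ {inc, dec}`. -/
def OCA.step (A : OCA Q α) : Q × ℕ → Vis (α × ℕ) → Q × ℕ → Prop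
  | (q, x), Vis.inc, (q', x') => x' = x + 1 ∧ (q, min x A.m, Vis.inc, q') ∈ A.Δ
  | (q, x), Vis.dec, (q', x') => 1 ≤ x ∧ x' = x - 1 ∧ (q, min x A.m, Vis.dec, q') ∈ A.Δ
  | (q, x), Vis.sym (a, y), (q', x') => y = x ∧ x' = x ∧ (q, min x A.m, Vis.sym a, q') ∈ A.Δ

/-- `A.RunFrom c ts cs` holds if there is a partial run of `A` starting in
configuration `c`, with trace `ts`, visiting exactly the configurations
listed in `cs` (starting with `c`). -/
inductive OCA.RunFrom (A : OCA Q α) : Q × ℕ → List (Vis (α × ℕ)) → List (Q × ℕ) → Prop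
  | nil (c : Q × ℕ) : OCA.RunFrom A c [] [c]
  | cons {c c' : Q × ℕ} {τ : Vis (α × ℕ)} {ts : List (Vis (α × ℕ))} {cs : List (Q × ℕ)} :
      A.step c τ c' → OCA.RunFrom A c' ts cs → OCA.RunFrom A c (τ :: ts) (c :: cs)

/-- `ts` is the trace of some accepting run of `A` (a run starting in the
initial configuration `(ι,0)` whose last configuration has a final state). -/
def OCA.AccTrace (A : OCA Q α) (ts : List (Vis (α × ℕ))) : Prop :=
  ∃ cs c, A.RunFrom (A.init, 0) ts cs ∧ cs.getLast? = some c ∧ c.1 ∈ A.final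

/-- Projection of a trace letter used for the visibly semantics:
`(a,x)` becomes `a`, and `inc`/`dec` are kept. -/
def visOf : Vis (α × ℕ) → Vis α
  | Vis.sym (a, _) => Vis.sym a
  | Vis.inc => Vis.inc
  | Vis.dec => Vis.dec

/-- The visibly projection of a trace. -/
def visMap (ts : List (Vis (α × ℕ))) : List (Vis α) := ts.map visOf

/-- The observability projection of a trace: keep the pairs `(a,x)`,
erase `inc`/`dec`. -/
def obsMap (ts : List (Vis (α × ℕ))) : List (α × ℕ) :=
  ts.filterMap fun τ => match τ with
    | Vis.sym p => some p
    | _ => none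

/-- The classical projection of a trace: `(a,x)` becomes `a`,
`inc`/`dec` are erased. -/
def ocaMap (ts : List (Vis (α × ℕ))) : List α :=
  ts.filterMap fun τ => match τ with
    | Vis.sym (a, _) => some a
    | _ => none

/-- The visibly semantics `L_vis(A)`. -/
def OCA.Lvis (A : OCA Q α) : Set (List (Vis α)) :=
  {w | ∃ ts, A.AccTrace ts ∧ visMap ts = w}

/-- The observability semantics `L_obs(A)`. -/
def OCA.Lobs (A : OCA Q α) : Set (List (α × ℕ)) :=
  {w | ∃ ts, A.AccTrace ts ∧ obsMap ts = w}

/-- The classical semantics `L_oca(A)`. -/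
def OCA.Loca (A : OCA Q α) : Set (List α) :=
  {w | ∃ ts, A.AccTrace ts ∧ ocaMap ts = w}

/-- An OCA is deterministic if for every state `q`, counter test `k ≤ m` and
letter `σ ∈ α ∪ {inc,dec}` there is exactly one target state. -/
def OCA.Deterministic (A : OCA Q α) : Prop :=
  ∀ (q : Q) (k : ℕ) (σ : Vis α), k ≤ A.m → ∃! q' : Q, (q, k, σ, q') ∈ A.Δ

/-- Test for the letter `inc`. -/
def isIncB : Vis α → Bool
  | Vis.inc => true
  | _ => false

/-- Test for the letter `dec`. -/
def isDecB : Vis α → Bool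
  | Vis.dec => true
  | _ => false

/-- Well-formed words over `α ∪ {inc,dec}`: no prefix contains more `dec`'s
than `inc`'s. -/
def WFWords (α : Type*) : Set (List (Vis α)) :=
  {w | ∀ p, p <+: w → p.countP isDecB ≤ p.countP isIncB}

/-- `encFrom x0 w` encodes `w ∈ (α × ℕ)*` starting from previous counter
value `x0`: each `(a,x)` becomes `inc^(x-x0) a` (if `x ≥ x0`) or
`dec^(x0-x) a` (otherwise). -/
def encFrom : ℕ → List (α × ℕ) → List (Vis α)
  | _, [] => []
  | x0, (a, x) :: w =>
      (if x0 ≤ x then List.replicate (x - x0) Vis.inc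
       else List.replicate (x0 - x) Vis.dec) ++ Vis.sym a :: encFrom x w

/-- The encoding `enc : (α × ℕ)* → (α ∪ {inc,dec})*`. -/
def enc (w : List (α × ℕ)) : List (Vis α) := encFrom 0 w

/-- The set `Enc_α` of valid encodings. -/
def EncSet (α : Type*) : Set (List (Vis α)) := Set.range (enc (α := α))

/-- A set `S ⊆ ℕ` is ultimately periodic if there are `t` and `d ≥ 1` such
that for all `x ≥ t`, `x ∈ S ↔ x + d ∈ S`. -/
def UltPeriodic (S : Set ℕ) : Prop :=
  ∃ t d : ℕ, 1 ≤ d ∧ ∀ x : ℕ, t ≤ x → (x ∈ S ↔ x + d ∈ S)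

/-- An extended OCA (eOCA): transitions are guarded by ultimately periodic
sets of counter values, and acceptance is given by an ultimately periodic set
of counter values for each state. -/
structure EOCA (Q : Type*) (α : Type*) where
  init : Q
  f : Q → Set ℕ
  hf : ∀ q, UltPeriodic (f q)
  Δ : Set (Q × Set ℕ × Vis α × Q)
  hΔfin : Δ.Finite
  hΔup : ∀ t ∈ Δ, UltPeriodic t.2.1

/-- One step of an eOCA. -/
def EOCA.step (A : EOCA Q α) : Q × ℕ → Vis (α × ℕ) → Q × ℕ → Prop
  | (q, x), Vis.inc, (q', x') =>
      x' = x + 1 ∧ ∃ S, (q, S, Vis.inc, q') ∈ A.Δ ∧ x ∈ S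
  | (q, x), Vis.dec, (q', x') =>
      1 ≤ x ∧ x' = x - 1 ∧ ∃ S, (q, S, Vis.dec, q') ∈ A.Δ ∧ x ∈ S
  | (q, x), Vis.sym (a, y), (q', x') =>
      y = x ∧ x' = x ∧ ∃ S, (q, S, Vis.sym a, q') ∈ A.Δ ∧ x ∈ S

/-- Partial runs of an eOCA, as for OCAs. -/
inductive EOCA.RunFrom (A : EOCA Q α) : Q × ℕ → List (Vis (α × ℕ)) → List (Q × ℕ) → Prop
  | nil (c : Q × ℕ) : EOCA.RunFrom A c [] [c]
  | cons {c c' : Q × ℕ} {τ : Vis (α × ℕ)} {ts : List (Vis (α × ℕ))} {cs : List (Q × ℕ)} :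
      A.step c τ c' → EOCA.RunFrom A c' ts cs → EOCA.RunFrom A c (τ :: ts) (c :: cs)

/-- Accepting traces of an eOCA: the last configuration `(q,x)` satisfies
`x ∈ f q`. -/
def EOCA.AccTrace (A : EOCA Q α) (ts : List (Vis (α × ℕ))) : Prop :=
  ∃ cs c, A.RunFrom (A.init, 0) ts cs ∧ cs.getLast? = some c ∧ c.2 ∈ A.f c.1

/-- The visibly semantics of an eOCA. -/
def EOCA.Lvis (A : EOCA Q α) : Set (List (Vis α)) :=
  {w | ∃ ts, A.AccTrace ts ∧ visMap ts = w}

/-- The observability semantics of an eOCA. -/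
def EOCA.Lobs (A : EOCA Q α) : Set (List (α × ℕ)) :=
  {w | ∃ ts, A.AccTrace ts ∧ obsMap ts = w}

/-- The classical semantics of an eOCA. -/
def EOCA.Loca (A : EOCA Q α) : Set (List α) :=
  {w | ∃ ts, A.AccTrace ts ∧ ocaMap ts = w}

/-! The letters `inc` and `dec` of a trace determine the counter value at each of its symbols, so
the observability projection of a run is a function of its visibly projection. This function,
`decodeFrom 0`, is a left inverse of `enc`; on a visibly language that lies in the range of `enc`,
taking the image under it is therefore the same as taking the preimage under `enc`. -/

/-- Left inverse of `encFrom x`: annotates each symbol with the counter value reached when the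
counter operations are executed from `x`. Truncated subtraction makes `dec` at `0` leave the
counter at `0`; this never happens on the visibly projection of a run from counter value `x`. -/
def decodeFrom : ℕ → List (Vis α) → List (α × ℕ)
  | _, [] => []
  | x, Vis.sym a :: w => (a, x) :: decodeFrom x w
  | x, Vis.inc :: w => decodeFrom (x + 1) w
  | x, Vis.dec :: w => decodeFrom (x - 1) w

theorem decodeFrom_replicate_inc_append (n x : ℕ) (w : List (Vis α)) :
    decodeFrom x (List.replicate n Vis.inc ++ w) = decodeFrom (x + n) w := by
  induction n generalizing x with
  | zero => rfl
  | succ n ih =>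
    rw [List.replicate_succ, List.cons_append, decodeFrom, ih, Nat.add_assoc, Nat.add_comm 1]

theorem decodeFrom_replicate_dec_append (n x : ℕ) (w : List (Vis α)) :
    decodeFrom x (List.replicate n Vis.dec ++ w) = decodeFrom (x - n) w := by
  induction n generalizing x with
  | zero => rfl
  | succ n ih =>
    rw [List.replicate_succ, List.cons_append, decodeFrom, ih, Nat.sub_sub, Nat.add_comm 1]

theorem decodeFrom_leftInverse_encFrom (x : ℕ) :
    Function.LeftInverse (decodeFrom x) (encFrom (α := α) x) := by
  intro w
  induction w generalizing x with
  | nil => rfl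
  | cons p w ih =>
    obtain ⟨a, y⟩ := p
    rw [encFrom]
    split_ifs with hxy
    · rw [decodeFrom_replicate_inc_append, Nat.add_sub_cancel' hxy, decodeFrom, ih]
    · rw [decodeFrom_replicate_dec_append, Nat.sub_sub_self (le_of_not_ge hxy), decodeFrom, ih]

theorem OCA.RunFrom.obsMap_eq_decodeFrom_visMap {A : OCA Q α} {c : Q × ℕ}
    {ts : List (Vis (α × ℕ))} {cs : List (Q × ℕ)} (hrun : A.RunFrom c ts cs) :
    obsMap ts = decodeFrom c.2 (visMap ts) := by
  induction hrun with
  | nil => rfl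
  | @cons c c' τ ts cs hstep _ ih =>
    obtain ⟨q, x⟩ := c
    obtain ⟨q', x'⟩ := c'
    rcases τ with ⟨a, y⟩ | _ | _
    · obtain ⟨rfl, rfl, _⟩ := hstep
      exact congrArg ((a, _) :: ·) ih
    · obtain ⟨rfl, _⟩ := hstep
      exact ih
    · obtain ⟨_, rfl, _⟩ := hstep
      exact ih

theorem OCA.Lobs_eq_image_decodeFrom_Lvis (A : OCA Q α) : A.Lobs = decodeFrom 0 '' A.Lvis :=
  calc
    A.Lobs = obsMap '' {ts | A.AccTrace ts} := rfl
    _ = (fun ts => decodeFrom 0 (visMap ts)) '' {ts | A.AccTrace ts} :=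
      Set.image_congr fun _ ⟨_, _, hrun, _⟩ => hrun.obsMap_eq_decodeFrom_visMap
    _ = decodeFrom 0 '' A.Lvis := (Set.image_image ..).symm

theorem stmt6_general (A : OCA Q α) (h : A.Lvis ⊆ EncSet α) :
    A.Lvis = enc '' A.Lobs ∧ A.Lobs = {w | enc w ∈ A.Lvis} := by
  have image_preimage : enc '' (enc ⁻¹' A.Lvis) = A.Lvis := Set.image_preimage_eq_of_subset h
  have lobs_eq : A.Lobs = enc ⁻¹' A.Lvis :=
    calc
      A.Lobs = decodeFrom 0 '' A.Lvis := A.Lobs_eq_image_decodeFrom_Lvis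
      _ = decodeFrom 0 '' (enc '' (enc ⁻¹' A.Lvis)) := by rw [image_preimage]
      _ = enc ⁻¹' A.Lvis := (decodeFrom_leftInverse_encFrom 0).image_image _
  exact ⟨by rw [lobs_eq, image_preimage], lobs_eq⟩

/-- if the visibly semantics of an OCA consists of valid
encodings only, then it is exactly the image of the observability semantics
under `enc`. -/
theorem stmt6 {α Q : Type} [Fintype α] [Nonempty α] [Fintype Q]
    (A : OCA Q α) (h : A.Lvis ⊆ EncSet α) :
    A.Lvis = enc '' A.Lobs ∧ A.Lobs = {w | enc w ∈ A.Lvis} :=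
  stmt6_general A h
end

section
/- Let A be an OCA over a nonempty finite alphabet Σ and let p, q be states of A. Then both of the following sets are ultimately periodic: X_{p,q} := {x ∈ ℕ : there is a partial run from (p,x) to (q,x) all of whose steps are labeled inc or dec}, and Y_{p,q} := {x ∈ ℕ : there exist x' ∈ ℕ and a partial run from (p,x) to (q,x') all of whose steps are labeled inc or dec}. -/
variable {Q α : Type*}

/-!
A run from level `x` back to level `x` alternates between stretches below `x` and stretches above
`x`. Beyond the threshold, the transitions no longer depend on the level, so what the stretches
above `x` can do is independent of `x`, while what those below `x + 1` can do is determined by what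
those below `x` can do. As there are finitely many relations on the states, the latter is ultimately
periodic in `x`, and hence so is `X p q`. The set `Y p q` becomes an instance of `X` once a
sink, entered from `q` and moving freely between the levels, has been added.
-/

theorem exists_period_of_succ_eq {X : Type*} [Finite X] {f : ℕ → X} {F : X → X} {m : ℕ}
    (hf : ∀ x, m ≤ x → f (x + 1) = F (f x)) :
    ∃ t, m ≤ t ∧ ∃ d, 1 ≤ d ∧ ∀ x, t ≤ x → f (x + d) = f x := by
  obtain ⟨i, hi, j, -, hij, heq⟩ := (Set.Ici_infinite m).exists_lt_map_eq_of_mapsTo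
    (Set.mapsTo_univ f _) Set.finite_univ
  refine ⟨i, hi, j - i, by omega, fun x hx => ?_⟩
  induction x, hx using Nat.le_induction with
  | base => rw [Nat.add_sub_cancel' hij.le, heq]
  | succ x hx ih =>
    have hmx : m ≤ x := le_trans hi hx
    rw [Nat.add_right_comm, hf _ (hmx.trans (Nat.le_add_right _ _)), ih, hf x hmx]

/-- A one-counter transition system without letters, the level being the value of the counter.
Both relations are indexed by the lower of the two levels involved: `inc x` consists of the moves
from level `x` to level `x + 1`, and `dec x` of those from level `x + 1` to level `x`. -/
structure CounterSystem (Q : Type*) where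
  inc : ℕ → Q → Q → Prop
  dec : ℕ → Q → Q → Prop

namespace CounterSystem

open Relation Set

variable (S : CounterSystem Q) {c c' : Q × ℕ} {p q : Q} {m x y : ℕ}

/-- The one-step relation between the configurations of a counter system. -/
inductive Step : Q × ℕ → Q × ℕ → Prop
  | inc {x : ℕ} {p q : Q} : S.inc x p q → Step (p, x) (q, x + 1)
  | dec {x : ℕ} {p q : Q} : S.dec x p q → Step (p, x + 1) (q, x)

/-- Reachability by a run all of whose levels are in `s`; the empty run is allowed at every
level. -/
def ReachWithin (s : Set ℕ) : Q × ℕ → Q × ℕ → Prop :=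
  ReflTransGen fun c c' => c.2 ∈ s ∧ c'.2 ∈ s ∧ S.Step c c'

/-- The pairs of states joined by a run from level `x` to level `x` that never exceeds `x`. -/
def LoopBelow (x : ℕ) (p q : Q) : Prop :=
  S.ReachWithin (Iic x) (p, x) (q, x)

/-- The pairs of states joined by a run from level `x` to level `x` that never falls short
of `x`. -/
def LoopAbove (x : ℕ) (p q : Q) : Prop :=
  S.ReachWithin (Ici x) (p, x) (q, x)

/-- Beyond level `m`, the transitions do not depend on the level. -/
structure StableFrom (m : ℕ) : Prop where
  inc_eq : ∀ x, m ≤ x → S.inc x = S.inc m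
  dec_eq : ∀ x, m ≤ x → S.dec x = S.dec m

/-- The pairs of states joined by a sequence of excursions from level `x + 1`, each of which
descends to level `x`, follows a loop given by `R` there, and ascends again. -/
def LoopVia (x : ℕ) (R : Q → Q → Prop) : Q → Q → Prop :=
  ReflTransGen (Comp (S.dec x) (Comp R (S.inc x)))

variable {S}

theorem ReachWithin.mono {s t : Set ℕ} (hst : s ⊆ t) (h : S.ReachWithin s c c') :
    S.ReachWithin t c c' :=
  ReflTransGen.mono (fun _ _ ⟨hc, hc', hstep⟩ => ⟨hst hc, hst hc', hstep⟩) _ _ h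

theorem ReachWithin.reflTransGen_step {s : Set ℕ} (h : S.ReachWithin s c c') :
    ReflTransGen S.Step c c' :=
  ReflTransGen.mono (fun _ _ ⟨_, _, hstep⟩ => hstep) _ _ h

theorem ReachWithin.head {s : Set ℕ} {c'' : Q × ℕ} (h : S.ReachWithin s c' c'')
    (hstep : S.Step c c') (hc : c.2 ∈ s) (hc' : c'.2 ∈ s) : S.ReachWithin s c c'' :=
  ReflTransGen.head ⟨hc, hc', hstep⟩ h

theorem ReachWithin.loopVia_and_exists (h : S.ReachWithin (Iic (x + 1)) c (q, x + 1)) :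
    (c.2 = x + 1 → S.LoopVia x (S.LoopBelow x) c.1 q) ∧
      (c.2 ≤ x → ∃ r, S.ReachWithin (Iic x) c (r, x) ∧
        Comp (S.inc x) (S.LoopVia x (S.LoopBelow x)) r q) := by
  induction h using ReflTransGen.head_induction_on with
  | refl => exact ⟨fun _ => .refl, fun h => absurd h (by simp)⟩
  | head hstep _ ih =>
    obtain ⟨-, hc', hstep⟩ := hstep
    cases hstep with
    | @inc y a b hinc =>
      have hyx : y ≤ x := Nat.le_of_succ_le_succ hc'
      refine ⟨fun hy => by simp_all, fun _ => ?_⟩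
      obtain rfl | hlt := hyx.eq_or_lt
      · exact ⟨a, .refl, b, hinc, ih.1 rfl⟩
      · obtain ⟨r, hr, hrq⟩ := ih.2 hlt
        exact ⟨r, hr.head (.inc hinc) hyx hlt, hrq⟩
    | @dec y a b hdec =>
      refine ⟨fun hy => ?_, fun hyx => ?_⟩
      · obtain rfl : y = x := Nat.succ.inj hy
        obtain ⟨r, hr, s, hinc, hsq⟩ := ih.2 le_rfl
        exact .head ⟨b, hdec, r, hr, hinc⟩ hsq
      · have hyx' : y ≤ x := Nat.le_of_succ_le hyx
        obtain ⟨r, hr, hrq⟩ := ih.2 hyx'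
        exact ⟨r, hr.head (.dec hdec) hyx hyx', hrq⟩

theorem loopBelow_succ (S : CounterSystem Q) (x : ℕ) :
    S.LoopBelow (x + 1) = S.LoopVia x (S.LoopBelow x) := by
  ext p q
  refine ⟨fun h => h.loopVia_and_exists.1 rfl, fun h => ?_⟩
  refine ReflTransGen.lift' (·, x + 1) ?_ _ _ h
  rintro a b ⟨r, hdec, s, hrs, hinc⟩
  have hx : x ∈ Iic (x + 1) := Nat.le_succ x
  have hrs' : S.ReachWithin (Iic (x + 1)) (r, x) (s, x) := hrs.mono (Iic_subset_Iic.2 hx)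
  exact (hrs'.head (.dec hdec) self_mem_Iic hx).tail ⟨hx, self_mem_Iic, .inc hinc⟩

theorem Step.le_and_le_or_le_and_le (h : S.Step c c') (x : ℕ) :
    (c.2 ≤ x ∧ c'.2 ≤ x) ∨ (x ≤ c.2 ∧ x ≤ c'.2) := by
  cases h <;> grind

theorem exists_reachWithin_of_reflTransGen_step (h : ReflTransGen S.Step c (q, x)) :
    (c.2 ≤ x → ∃ r, S.ReachWithin (Iic x) c (r, x) ∧
        ReflTransGen (S.LoopBelow x ⊔ S.LoopAbove x) r q) ∧
      (x ≤ c.2 → ∃ r, S.ReachWithin (Ici x) c (r, x) ∧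
        ReflTransGen (S.LoopBelow x ⊔ S.LoopAbove x) r q) := by
  induction h using ReflTransGen.head_induction_on with
  | refl => exact ⟨fun _ => ⟨q, .refl, .refl⟩, fun _ => ⟨q, .refl, .refl⟩⟩
  | @head c c' hstep _ ih =>
    obtain ⟨hc, hc'⟩ | ⟨hc, hc'⟩ := hstep.le_and_le_or_le_and_le x
    · obtain ⟨r, hr, hrq⟩ := ih.1 hc'
      have hcr : S.ReachWithin (Iic x) c (r, x) := hr.head hstep hc hc'
      refine ⟨fun _ => ⟨r, hcr, hrq⟩, fun hxc => ?_⟩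
      obtain rfl : c.2 = x := le_antisymm hc hxc
      exact ⟨c.1, .refl, .head (.inl hcr) hrq⟩
    · obtain ⟨r, hr, hrq⟩ := ih.2 hc'
      have hcr : S.ReachWithin (Ici x) c (r, x) := hr.head hstep hc hc'
      refine ⟨fun hcx => ?_, fun _ => ⟨r, hcr, hrq⟩⟩
      obtain rfl : c.2 = x := le_antisymm hcx hc
      exact ⟨c.1, .refl, .head (.inr hcr) hrq⟩

theorem reflTransGen_step_iff :
    ReflTransGen S.Step (p, x) (q, x) ↔ ReflTransGen (S.LoopBelow x ⊔ S.LoopAbove x) p q := by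
  constructor
  · intro h
    obtain ⟨r, hr, hrq⟩ := (exists_reachWithin_of_reflTransGen_step h).1 le_rfl
    exact .head (.inl hr) hrq
  · refine ReflTransGen.lift' (·, x) ?_ p q
    rintro a b (hab | hab)
    exacts [hab.reflTransGen_step, hab.reflTransGen_step]

namespace StableFrom

theorem step_shift (hS : S.StableFrom m) (hx : m ≤ x) (hy : m ≤ y) (h : S.Step c c')
    (hc : x ≤ c.2) (hc' : x ≤ c'.2) :
    S.Step (c.1, y + (c.2 - x)) (c'.1, y + (c'.2 - x)) := by
  cases h with
  | @inc k a b hinc =>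
    have hinc' : S.inc (y + (k - x)) a b := by
      rwa [hS.inc_eq _ (Nat.le_add_right_of_le hy), ← hS.inc_eq k (hx.trans hc)]
    rw [Nat.sub_add_comm hc]
    exact .inc hinc'
  | @dec k a b hdec =>
    have hdec' : S.dec (y + (k - x)) a b := by
      rwa [hS.dec_eq _ (Nat.le_add_right_of_le hy), ← hS.dec_eq k (hx.trans hc')]
    rw [Nat.sub_add_comm hc']
    exact .dec hdec'

theorem loopAbove_of_loopAbove (hS : S.StableFrom m) (hx : m ≤ x) (hy : m ≤ y)
    (h : S.LoopAbove x p q) : S.LoopAbove y p q := by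
  have hlift : S.ReachWithin (Ici y) (p, y + (x - x)) (q, y + (x - x)) :=
    ReflTransGen.lift (fun c : Q × ℕ => (c.1, y + (c.2 - x)))
      (fun _ _ ⟨hc, hc', hstep⟩ =>
        ⟨Nat.le_add_right _ _, Nat.le_add_right _ _, hS.step_shift hx hy hstep hc hc'⟩) _ _ h
  rwa [Nat.sub_self] at hlift

theorem loopAbove_eq (hS : S.StableFrom m) (hx : m ≤ x) : S.LoopAbove x = S.LoopAbove m := by
  ext p q
  exact ⟨hS.loopAbove_of_loopAbove hx le_rfl, hS.loopAbove_of_loopAbove le_rfl hx⟩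

theorem loopBelow_succ_eq (hS : S.StableFrom m) (hx : m ≤ x) :
    S.LoopBelow (x + 1) = S.LoopVia m (S.LoopBelow x) := by
  rw [loopBelow_succ, LoopVia, hS.inc_eq x hx, hS.dec_eq x hx, LoopVia]

theorem ultPeriodic_setOf_reflTransGen_step [Finite Q] (hS : S.StableFrom m) (p q : Q) :
    UltPeriodic {x | ReflTransGen S.Step (p, x) (q, x)} := by
  obtain ⟨t, hmt, d, hd, hperiod⟩ := exists_period_of_succ_eq fun _ => hS.loopBelow_succ_eq
  refine ⟨t, d, hd, fun x hx => ?_⟩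
  have hmx : m ≤ x := hmt.trans hx
  have hmxd : m ≤ x + d := hmx.trans (Nat.le_add_right x d)
  simp only [mem_ofPred_eq, reflTransGen_step_iff, hperiod x hx, hS.loopAbove_eq hmx,
    hS.loopAbove_eq hmxd]

end StableFrom

/-- The moves of `R` together with a sink `none`, which can be entered from `q` and never left. -/
def addSink (q : Q) (R : Q → Q → Prop) : Option Q → Option Q → Prop
  | some a, some b => R a b
  | some a, none => a = q
  | none, none => True
  | none, some _ => False

/-- The counter system `S` with a sink `none` added, which can be entered from `q` and in which
the counter can be moved to every level. It turns reaching `q` at an arbitrary level into reaching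
the sink at a prescribed one. -/
def withSink (S : CounterSystem Q) (q : Q) : CounterSystem (Option Q) where
  inc x := addSink q (S.inc x)
  dec x := addSink q (S.dec x)

theorem StableFrom.withSink (hS : S.StableFrom m) (q : Q) : (S.withSink q).StableFrom m where
  inc_eq x hx := congrArg (addSink q) (hS.inc_eq x hx)
  dec_eq x hx := congrArg (addSink q) (hS.dec_eq x hx)

theorem reflTransGen_step_withSink_none (S : CounterSystem Q) (q : Q) (x y : ℕ) :
    ReflTransGen (S.withSink q).Step (none, x) (none, y) :=
  ReflTransGen.lift (none, ·) (fun _ _ h => h) _ _ <|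
    reflTransGen_of_succ (fun x y => (S.withSink q).Step (none, x) (none, y))
      (fun _ _ => .inc trivial) (fun _ _ => .dec trivial)

theorem Step.withSink (h : S.Step c c') (q : Q) :
    (S.withSink q).Step (some c.1, c.2) (some c'.1, c'.2) := by
  cases h with
  | inc h => exact .inc h
  | dec h => exact .dec h

theorem exists_reflTransGen_step_of_withSink {a : Option Q × ℕ}
    (h : ReflTransGen (S.withSink q).Step a (none, x)) (ha : a.1 = some p) :
    ∃ y, ReflTransGen S.Step (p, a.2) (q, y) := by
  induction h using ReflTransGen.head_induction_on generalizing p with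
  | refl => contradiction
  | head hstep _ ih =>
    cases hstep with
    | @inc y _ b hinc =>
      obtain rfl := ha
      cases b with
      | none => obtain rfl : p = q := hinc; exact ⟨y, .refl⟩
      | some b => exact (ih rfl).imp fun _ => .head (.inc hinc)
    | @dec y _ b hdec =>
      obtain rfl := ha
      cases b with
      | none => obtain rfl : p = q := hdec; exact ⟨y + 1, .refl⟩
      | some b => exact (ih rfl).imp fun _ => .head (.dec hdec)

theorem exists_reflTransGen_step_iff_withSink :
    (∃ y, ReflTransGen S.Step (p, x) (q, y)) ↔
      ReflTransGen (S.withSink q).Step (some p, x) (none, x) := by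
  refine ⟨?_, fun h => exists_reflTransGen_step_of_withSink h rfl⟩
  rintro ⟨y, h⟩
  have hq : ReflTransGen (S.withSink q).Step (some p, x) (some q, y) :=
    ReflTransGen.lift (fun c : Q × ℕ => (some c.1, c.2)) (fun _ _ hstep => hstep.withSink q) _ _ h
  have hsink : (S.withSink q).Step (some q, y) (none, y + 1) := .inc rfl
  exact (hq.tail hsink).trans (S.reflTransGen_step_withSink_none q _ _)

end CounterSystem

namespace OCA

open Relation

variable {A : OCA Q α} {c c' : Q × ℕ}

/-- The counter operations of an OCA. A decrement to level `x` is guarded by the counter value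
`x + 1` before it. -/
def counterSystem (A : OCA Q α) : CounterSystem Q where
  inc x p q := (p, min x A.m, Vis.inc, q) ∈ A.Δ
  dec x p q := (p, min (x + 1) A.m, Vis.dec, q) ∈ A.Δ

theorem stableFrom_counterSystem (A : OCA Q α) : A.counterSystem.StableFrom A.m where
  inc_eq x hx := by simp [counterSystem, hx]
  dec_eq x hx := by simp [counterSystem, Nat.le_succ_of_le hx]

theorem counterSystem_step_iff :
    A.counterSystem.Step c c' ↔ ∃ τ, A.step c τ c' ∧ (τ = Vis.inc ∨ τ = Vis.dec) := by
  constructor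
  · rintro (h | h)
    · exact ⟨Vis.inc, ⟨rfl, h⟩, .inl rfl⟩
    · exact ⟨Vis.dec, ⟨Nat.le_add_left _ _, rfl, h⟩, .inr rfl⟩
  · obtain ⟨p, x⟩ := c
    obtain ⟨q, y⟩ := c'
    rintro ⟨τ, h, rfl | rfl⟩
    · obtain ⟨rfl, h⟩ := h
      exact .inc h
    · obtain ⟨hx, rfl, h⟩ := h
      obtain ⟨y, rfl⟩ := Nat.exists_eq_add_of_le' hx
      exact .dec h

theorem RunFrom.getLast?_cons {ts : List (Vis (α × ℕ))} {cs : List (Q × ℕ)}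
    (h : A.RunFrom c ts cs) (a : Q × ℕ) : (a :: cs).getLast? = cs.getLast? := by
  cases h <;> simp

theorem RunFrom.reflTransGen_step {ts : List (Vis (α × ℕ))} {cs : List (Q × ℕ)}
    (h : A.RunFrom c ts cs) (hlast : cs.getLast? = some c')
    (hts : ∀ τ ∈ ts, τ = Vis.inc ∨ τ = Vis.dec) : ReflTransGen A.counterSystem.Step c c' := by
  induction h with
  | nil c =>
    obtain rfl : c = c' := by simpa using hlast
    exact .refl
  | cons hstep hrun ih =>
    rw [hrun.getLast?_cons] at hlast
    obtain ⟨hτ, hts⟩ := List.forall_mem_cons.1 hts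
    exact .head (counterSystem_step_iff.2 ⟨_, hstep, hτ⟩) (ih hlast hts)

theorem exists_runFrom_iff :
    (∃ ts cs, A.RunFrom c ts cs ∧ cs.getLast? = some c' ∧ ∀ τ ∈ ts, τ = Vis.inc ∨ τ = Vis.dec) ↔
      ReflTransGen A.counterSystem.Step c c' := by
  refine ⟨fun ⟨_, _, h, hlast, hts⟩ => h.reflTransGen_step hlast hts, fun h => ?_⟩
  induction h using ReflTransGen.head_induction_on with
  | refl => exact ⟨[], [c'], .nil c', rfl, by simp⟩
  | head hstep _ ih =>
    obtain ⟨ts, cs, hrun, hlast, hts⟩ := ih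
    obtain ⟨τ, hstep, hτ⟩ := counterSystem_step_iff.1 hstep
    exact ⟨τ :: ts, _ :: cs, .cons hstep hrun, (hrun.getLast?_cons _).trans hlast,
      List.forall_mem_cons.2 ⟨hτ, hts⟩⟩

end OCA

theorem stmt8_general {α Q : Type*} [Finite Q] (A : OCA Q α) (p q : Q) :
    UltPeriodic {x : ℕ | ∃ ts cs, A.RunFrom (p, x) ts cs ∧
        cs.getLast? = some (q, x) ∧ ∀ τ ∈ ts, τ = Vis.inc ∨ τ = Vis.dec} ∧
    UltPeriodic {x : ℕ | ∃ x' : ℕ, ∃ ts cs, A.RunFrom (p, x) ts cs ∧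
        cs.getLast? = some (q, x') ∧ ∀ τ ∈ ts, τ = Vis.inc ∨ τ = Vis.dec} := by
  simp only [OCA.exists_runFrom_iff, CounterSystem.exists_reflTransGen_step_iff_withSink]
  have hA := A.stableFrom_counterSystem
  exact ⟨hA.ultPeriodic_setOf_reflTransGen_step p q,
    (hA.withSink q).ultPeriodic_setOf_reflTransGen_step (some p) none⟩

/-- the sets `X_{p,q}` (counter values admitting an oscillation
from `p` back to the same value in `q`) and `Y_{p,q}` (counter values from
which `q` is reachable using only counter operations) are ultimately
periodic. -/
theorem stmt8 {α Q : Type} [Fintype α] [Nonempty α] [Fintype Q]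
    (A : OCA Q α) (p q : Q) :
    UltPeriodic {x : ℕ | ∃ ts cs, A.RunFrom (p, x) ts cs ∧
        cs.getLast? = some (q, x) ∧ ∀ τ ∈ ts, τ = Vis.inc ∨ τ = Vis.dec} ∧
    UltPeriodic {x : ℕ | ∃ x' : ℕ, ∃ ts cs, A.RunFrom (p, x) ts cs ∧
        cs.getLast? = some (q, x') ∧ ∀ τ ∈ ts, τ = Vis.inc ∨ τ = Vis.dec} := by
  exact stmt8_general A p q
end

section
/- For every eOCA A over a nonempty finite alphabet Σ there exists a deterministic OCA A' over Σ such that L_oca(A') = L_oca(A), L_vis(A') = L_vis(A), and L_obs(A') = L_obs(A). -/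
variable {Q α : Type*}

/-!
Only finitely many ultimately periodic sets occur in an eOCA, so they share a threshold `t` and a
period `d`. Membership of a counter value `x` in any of them is decided by its residue modulo `d`
together with `min x t`. The residue can be updated along `inc` and `dec`; an OCA that tests its
counter up to `t + 1` can also recompute `min x t` after every operation, since decrementing from
`t + 1` or more leaves a value at least `t`. The subset construction therefore applies, with the
class of `x` kept in the state: the counter value is a function of the trace, so it is common to
all runs with a given trace, and only the set of states has to be tracked. The resulting automaton
has the same accepting traces as the given one, and all three semantics are images of these.
-/

universe u v

/-- The set `S` has period `d` from the threshold `t` on. Unlike in `UltPeriodic`, the threshold and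
the period are explicit, and `d = 0` is allowed. -/
def PeriodicFrom (t d : ℕ) (S : Set ℕ) : Prop :=
  ∀ x : ℕ, t ≤ x → (x ∈ S ↔ x + d ∈ S)

namespace PeriodicFrom

variable {S : Set ℕ} {t d : ℕ}

theorem mono {t' : ℕ} (h : PeriodicFrom t d S) (ht : t ≤ t') : PeriodicFrom t' d S :=
  fun x hx => h x (ht.trans hx)

theorem mul_right (h : PeriodicFrom t d S) (n : ℕ) : PeriodicFrom t (d * n) S := by
  induction n with
  | zero => exact fun x _ => Iff.rfl
  | succ n ih =>
    intro x hx
    rw [ih x hx, h (x + d * n) (hx.trans (Nat.le_add_right _ _)), Nat.mul_succ, Nat.add_assoc]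

theorem of_dvd {d' : ℕ} (h : PeriodicFrom t d S) (hd : d ∣ d') : PeriodicFrom t d' S := by
  obtain ⟨n, rfl⟩ := hd
  exact h.mul_right n

theorem mem_iff_of_modEq {x y : ℕ} (h : PeriodicFrom t d S) (hx : t ≤ x) (hy : t ≤ y)
    (hxy : x ≡ y [MOD d]) : x ∈ S ↔ y ∈ S := by
  wlog hle : x ≤ y generalizing x y
  · exact (this hy hx hxy.symm (Nat.le_of_not_le hle)).symm
  have hdvd : d ∣ y - x := (Nat.modEq_iff_dvd' hle).1 hxy
  rw [h.of_dvd hdvd x hx, Nat.add_sub_cancel' hle]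

end PeriodicFrom

theorem exists_forall_periodicFrom {F : Set (Set ℕ)} (hF : F.Finite)
    (h : ∀ S ∈ F, UltPeriodic S) :
    ∃ t d : ℕ, 1 ≤ d ∧ ∀ S ∈ F, PeriodicFrom t d S := by
  induction F, hF using Set.Finite.induction_on with
  | empty => exact ⟨0, 1, le_rfl, by simp⟩
  | @insert S F _ _ ih =>
    obtain ⟨t₁, d₁, hd₁, hS⟩ : ∃ t d : ℕ, 1 ≤ d ∧ PeriodicFrom t d S := h S (F.mem_insert S)
    obtain ⟨t₂, d₂, hd₂, hF⟩ := ih fun T hT => h T (F.mem_insert_of_mem S hT)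
    refine ⟨max t₁ t₂, d₁ * d₂, Nat.mul_pos hd₁ hd₂, Set.forall_mem_insert.2 ⟨?_, fun T hT => ?_⟩⟩
    · exact (hS.mono (le_max_left _ _)).of_dvd (Nat.dvd_mul_right _ _)
    · exact ((hF T hT).mono (le_max_right _ _)).of_dvd (Nat.dvd_mul_left _ _)

/-- The finite abstraction of a counter value that decides membership in every set which has
period `d` from `t` on: its residue modulo `d` and its truncation at `t`. -/
def counterClass (t d x : ℕ) : ZMod d × Fin (t + 1) :=
  (x, Fin.clamp x t)

theorem PeriodicFrom.mem_iff_of_counterClass_eq {S : Set ℕ} {t d x y : ℕ}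
    (h : PeriodicFrom t d S) (hxy : counterClass t d x = counterClass t d y) :
    x ∈ S ↔ y ∈ S := by
  obtain ⟨hmod, hclamp⟩ := Prod.ext_iff.1 hxy
  have hmin : min x t = min y t := congrArg Fin.val hclamp
  obtain rfl | ⟨hx, hy⟩ : x = y ∨ t ≤ x ∧ t ≤ y := by omega
  · rfl
  · exact h.mem_iff_of_modEq hx hy ((ZMod.natCast_eq_natCast_iff _ _ _).1 hmod)

theorem PeriodicFrom.counterClass_mem_image_iff {S : Set ℕ} {t d x : ℕ}
    (h : PeriodicFrom t d S) : counterClass t d x ∈ counterClass t d '' S ↔ x ∈ S :=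
  ⟨fun ⟨_, hy, hyx⟩ => (h.mem_iff_of_counterClass_eq hyx).1 hy, Set.mem_image_of_mem _⟩

namespace Vis

/-- The effect of a letter on the counter. The codomain is generic because the same operations are
performed on counter values in `ℕ`, where `dec` is truncated, and on their residues in `ZMod d`. -/
def act {R : Type*} [One R] [Add R] [Sub R] : Vis α → R → R
  | sym _, r => r
  | inc, r => r + 1
  | dec, r => r - 1

/-- The condition that a trace letter imposes on the counter value at which it is read, in any
one-counter automaton. -/
def Enabled : Vis (α × ℕ) → ℕ → Prop
  | sym (_, y), x => y = x
  | inc, _ => True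
  | dec, x => 1 ≤ x

theorem Enabled.cast_act {R : Type*} [AddGroupWithOne R] {τ : Vis (α × ℕ)} {x : ℕ}
    (h : τ.Enabled x) : (((visOf τ).act x : ℕ) : R) = (visOf τ).act (x : R) := by
  rcases τ with _ | _ | _
  · rfl
  · exact Nat.cast_succ x
  · exact Nat.cast_pred h

theorem clamp_act_min (σ : Vis α) (t x : ℕ) :
    Fin.clamp (σ.act (min x (t + 1))) t = Fin.clamp (σ.act x) t := by
  ext
  rcases σ with _ | _ | _ <;> simp only [act, Fin.coe_clamp] <;> omega

end Vis

theorem OCA.step_iff {A : OCA Q α} {c c' : Q × ℕ} {τ : Vis (α × ℕ)} :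
    A.step c τ c' ↔
      τ.Enabled c.2 ∧ c'.2 = (visOf τ).act c.2 ∧ (c.1, min c.2 A.m, visOf τ, c'.1) ∈ A.Δ := by
  rcases τ with ⟨_, _⟩ | _ | _ <;> simp [OCA.step, Vis.Enabled, Vis.act, visOf]

theorem EOCA.step_iff {A : EOCA Q α} {c c' : Q × ℕ} {τ : Vis (α × ℕ)} :
    A.step c τ c' ↔
      τ.Enabled c.2 ∧ c'.2 = (visOf τ).act c.2 ∧
        ∃ S, (c.1, S, visOf τ, c'.1) ∈ A.Δ ∧ c.2 ∈ S := by
  rcases τ with ⟨_, _⟩ | _ | _ <;> simp [EOCA.step, Vis.Enabled, Vis.act, visOf]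

/-- The configuration graph of an OCA, as an automaton reading traces. -/
def OCA.configNFA (A : OCA Q α) : NFA (Vis (α × ℕ)) (Q × ℕ) where
  step c τ := {c' | A.step c τ c'}
  start := {(A.init, 0)}
  accept := {c | c.1 ∈ A.final}

/-- The configuration graph of an eOCA, as an automaton reading traces. -/
def EOCA.configNFA (A : EOCA Q α) : NFA (Vis (α × ℕ)) (Q × ℕ) where
  step c τ := {c' | A.step c τ c'}
  start := {(A.init, 0)}
  accept := {c | c.2 ∈ A.f c.1}

theorem mem_evalFrom_singleton_iff_exists_run {L C : Type*} {M : NFA L C}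
    {Run : C → List L → List C → Prop} (hnil : ∀ {c cs}, Run c [] cs ↔ cs = [c])
    (hcons : ∀ {c τ ts cs}, Run c (τ :: ts) cs ↔
      ∃ c' ∈ M.step c τ, ∃ cs', Run c' ts cs' ∧ cs = c :: cs')
    {c e : C} {ts : List L} :
    e ∈ M.evalFrom {c} ts ↔ ∃ cs, Run c ts cs ∧ cs.getLast? = some e := by
  have ne_nil : ∀ {c ts cs}, Run c ts cs → cs ≠ [] := by
    rintro c (_ | ⟨τ, ts⟩) cs h
    · simp [hnil.1 h]
    · obtain ⟨_, _, _, _, rfl⟩ := hcons.1 h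
      exact List.cons_ne_nil _ _
  have getLast?_cons : ∀ {c c' ts cs}, Run c' ts cs → (c :: cs).getLast? = cs.getLast? :=
    fun h => List.getLast?_cons_of_ne_nil (ne_nil h)
  induction ts generalizing c with
  | nil => simp [hnil, eq_comm]
  | cons τ ts ih =>
    rw [NFA.evalFrom_cons, NFA.stepSet_singleton, NFA.mem_evalFrom_iff_exists]
    simp only [ih, hcons]
    constructor
    · rintro ⟨c', hc', cs, hrun, hlast⟩
      exact ⟨c :: cs, ⟨c', hc', cs, hrun, rfl⟩, (getLast?_cons hrun).trans hlast⟩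
    · rintro ⟨_, ⟨c', hc', cs, hrun, rfl⟩, hlast⟩
      exact ⟨c', hc', cs, hrun, (getLast?_cons hrun).symm.trans hlast⟩

namespace OCA

variable {A : OCA Q α} {c e : Q × ℕ} {τ : Vis (α × ℕ)} {ts : List (Vis (α × ℕ))}
  {cs : List (Q × ℕ)}

theorem runFrom_nil_iff : A.RunFrom c [] cs ↔ cs = [c] :=
  ⟨fun | .nil _ => rfl, fun h => h ▸ .nil c⟩

theorem runFrom_cons_iff : A.RunFrom c (τ :: ts) cs ↔
    ∃ c' ∈ A.configNFA.step c τ, ∃ cs', A.RunFrom c' ts cs' ∧ cs = c :: cs' :=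
  ⟨fun | .cons hstep hrun => ⟨_, hstep, _, hrun, rfl⟩,
    fun ⟨_, hstep, _, hrun, hcs⟩ => hcs ▸ .cons hstep hrun⟩

theorem mem_evalFrom_configNFA_iff : e ∈ A.configNFA.evalFrom {c} ts ↔
    ∃ cs, A.RunFrom c ts cs ∧ cs.getLast? = some e :=
  mem_evalFrom_singleton_iff_exists_run runFrom_nil_iff runFrom_cons_iff

theorem accTrace_iff_mem_accepts : A.AccTrace ts ↔ ts ∈ A.configNFA.accepts := by
  constructor
  · rintro ⟨cs, e, hrun, hlast, he⟩
    exact ⟨e, he, mem_evalFrom_configNFA_iff.2 ⟨cs, hrun, hlast⟩⟩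
  · rintro ⟨e, he, heval⟩
    obtain ⟨cs, hrun, hlast⟩ := mem_evalFrom_configNFA_iff.1 heval
    exact ⟨cs, e, hrun, hlast, he⟩

theorem stepSet_configNFA_of_not_enabled {q : Q} {x : ℕ} (h : ¬ τ.Enabled x) :
    A.configNFA.stepSet {(q, x)} τ = ∅ := by
  ext c
  simp [configNFA, step_iff, h]

/-- The OCA with threshold `m` whose transition relation is the graph of `δ`. -/
def ofFun (init : Q) (final : Set Q) (m : ℕ) (δ : Q → ℕ → Vis α → Q) : OCA Q α where
  init := init
  final := final
  m := m
  Δ := {e | e.2.1 ≤ m ∧ e.2.2.2 = δ e.1 e.2.1 e.2.2.1}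
  valid _ he := he.1

section ofFun

variable {init : Q} {final : Set Q} {m : ℕ} {δ : Q → ℕ → Vis α → Q} {q : Q} {x : ℕ}

theorem ofFun_deterministic : (ofFun init final m δ).Deterministic :=
  fun q k σ hk => ⟨δ q k σ, ⟨hk, rfl⟩, fun _ h => h.2⟩

theorem stepSet_configNFA_ofFun_of_enabled (h : τ.Enabled x) :
    (ofFun init final m δ).configNFA.stepSet {(q, x)} τ =
      {(δ q (min x m) (visOf τ), (visOf τ).act x)} := by
  ext ⟨q', x'⟩
  simp [configNFA, step_iff, ofFun, h, and_comm]

end ofFun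

end OCA

namespace EOCA

variable {A : EOCA Q α} {c e : Q × ℕ} {τ : Vis (α × ℕ)} {ts : List (Vis (α × ℕ))}
  {cs : List (Q × ℕ)}

theorem runFrom_nil_iff : A.RunFrom c [] cs ↔ cs = [c] :=
  ⟨fun | .nil _ => rfl, fun h => h ▸ .nil c⟩

theorem runFrom_cons_iff : A.RunFrom c (τ :: ts) cs ↔
    ∃ c' ∈ A.configNFA.step c τ, ∃ cs', A.RunFrom c' ts cs' ∧ cs = c :: cs' :=
  ⟨fun | .cons hstep hrun => ⟨_, hstep, _, hrun, rfl⟩,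
    fun ⟨_, hstep, _, hrun, hcs⟩ => hcs ▸ .cons hstep hrun⟩

theorem mem_evalFrom_configNFA_iff : e ∈ A.configNFA.evalFrom {c} ts ↔
    ∃ cs, A.RunFrom c ts cs ∧ cs.getLast? = some e :=
  mem_evalFrom_singleton_iff_exists_run runFrom_nil_iff runFrom_cons_iff

theorem accTrace_iff_mem_accepts : A.AccTrace ts ↔ ts ∈ A.configNFA.accepts := by
  constructor
  · rintro ⟨cs, e, hrun, hlast, he⟩
    exact ⟨e, he, mem_evalFrom_configNFA_iff.2 ⟨cs, hrun, hlast⟩⟩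
  · rintro ⟨e, he, heval⟩
    obtain ⟨cs, hrun, hlast⟩ := mem_evalFrom_configNFA_iff.1 heval
    exact ⟨cs, e, hrun, hlast, he⟩

/-- The states reachable from `P` by a transition labelled `σ` whose guard belongs to `guards`.
The guards are a parameter so that the test `x ∈ S` can be replaced by one on the class of `x`. -/
def post (A : EOCA Q α) (guards : Set (Set ℕ)) (P : Set Q) (σ : Vis α) : Set Q :=
  {q' | ∃ q ∈ P, ∃ S, (q, S, σ, q') ∈ A.Δ ∧ S ∈ guards}

theorem post_congr {G G' : Set (Set ℕ)} {P : Set Q} {σ : Vis α}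
    (h : ∀ e ∈ A.Δ, e.2.1 ∈ G ↔ e.2.1 ∈ G') : A.post G P σ = A.post G' P σ := by
  ext q'
  refine exists_congr fun q => and_congr_right fun _ => exists_congr fun S => ?_
  exact and_congr_right fun hS => h _ hS

theorem stepSet_configNFA_of_enabled {P : Set Q} {x : ℕ} (h : τ.Enabled x) :
    A.configNFA.stepSet (P ×ˢ {x}) τ =
      A.post {S | x ∈ S} P (visOf τ) ×ˢ {(visOf τ).act x} := by
  ext ⟨q', x'⟩
  simp [NFA.mem_stepSet, configNFA, step_iff, post, h, and_left_comm (b := x' = _),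
    and_comm (b := x' = _)]

theorem stepSet_configNFA_of_not_enabled {P : Set Q} {x : ℕ} (h : ¬ τ.Enabled x) :
    A.configNFA.stepSet (P ×ˢ {x}) τ = ∅ := by
  ext c
  simp [NFA.mem_stepSet, configNFA, step_iff, h]

/-- All guards and acceptance sets of `A` have period `d` from the threshold `t` on. -/
structure UniformlyPeriodic (A : EOCA Q α) (t d : ℕ) : Prop where
  accept : ∀ q, PeriodicFrom t d (A.f q)
  guard : ∀ e ∈ A.Δ, PeriodicFrom t d e.2.1

theorem exists_uniformlyPeriodic [Finite Q] (A : EOCA Q α) :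
    ∃ t d : ℕ, 1 ≤ d ∧ A.UniformlyPeriodic t d := by
  have hfin : (Set.range A.f ∪ (fun e => e.2.1) '' A.Δ).Finite :=
    (Set.finite_range A.f).union (A.hΔfin.image _)
  obtain ⟨t, d, hd, h⟩ := exists_forall_periodicFrom hfin (by
    rintro S (⟨q, rfl⟩ | ⟨e, he, rfl⟩)
    exacts [A.hf q, A.hΔup e he])
  exact ⟨t, d, hd, fun q => h _ (.inl ⟨q, rfl⟩), fun e he => h _ (.inr ⟨e, he, rfl⟩)⟩

/-- The deterministic OCA which, at counter value `x`, is in the state `(P, counterClass t d x)`,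
where `P` is the set of states that `A` can have reached. The class is updated componentwise: the
residue from the old residue, and the truncation at `t` from the counter test `min x (t + 1)`. -/
def determinize (A : EOCA Q α) (t d : ℕ) : OCA (Set Q × ZMod d × Fin (t + 1)) α :=
  OCA.ofFun
    (init := ({A.init}, counterClass t d 0))
    (final := {s | ∃ q ∈ s.1, s.2 ∈ counterClass t d '' A.f q})
    (m := t + 1)
    (δ := fun s j σ =>
      (A.post {S | s.2 ∈ counterClass t d '' S} s.1 σ, σ.act s.2.1, Fin.clamp (σ.act j) t))

namespace UniformlyPeriodic

variable {t d x : ℕ} {P : Set Q}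

theorem stepSet_determinize (hA : A.UniformlyPeriodic t d) (h : τ.Enabled x) :
    (A.determinize t d).configNFA.stepSet {((P, counterClass t d x), x)} τ =
      {((A.post {S | x ∈ S} P (visOf τ), counterClass t d ((visOf τ).act x)),
        (visOf τ).act x)} := by
  have hpost : A.post {S | counterClass t d x ∈ counterClass t d '' S} P (visOf τ) =
      A.post {S | x ∈ S} P (visOf τ) :=
    post_congr fun e he => (hA.guard e he).counterClass_mem_image_iff
  have hclass : counterClass t d ((visOf τ).act x) =
      ((visOf τ).act (x : ZMod d), Fin.clamp ((visOf τ).act (min x (t + 1))) t) :=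
    Prod.ext h.cast_act (Vis.clamp_act_min _ _ _).symm
  rw [determinize, OCA.stepSet_configNFA_ofFun_of_enabled h, hpost, hclass, counterClass]

theorem mem_acceptsFrom_determinize (hA : A.UniformlyPeriodic t d) :
    ts ∈ (A.determinize t d).configNFA.acceptsFrom {((P, counterClass t d x), x)} ↔
      ts ∈ A.configNFA.acceptsFrom (P ×ˢ {x}) := by
  induction ts generalizing P x with
  | nil =>
    simp [OCA.configNFA, determinize, OCA.ofFun, configNFA, -Set.mem_image,
      (hA.accept _).counterClass_mem_image_iff]
  | cons τ ts ih =>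
    rw [NFA.cons_mem_acceptsFrom, NFA.cons_mem_acceptsFrom]
    by_cases h : τ.Enabled x
    · rw [hA.stepSet_determinize h, stepSet_configNFA_of_enabled h, ih]
    · rw [OCA.stepSet_configNFA_of_not_enabled h, stepSet_configNFA_of_not_enabled h]
      simp [NFA.mem_acceptsFrom, NFA.evalFrom_eq_biUnion_singleton _ ∅]

theorem accTrace_determinize (hA : A.UniformlyPeriodic t d) :
    (A.determinize t d).AccTrace = A.AccTrace := by
  ext ts
  rw [OCA.accTrace_iff_mem_accepts, accTrace_iff_mem_accepts]
  have h := hA.mem_acceptsFrom_determinize (P := {A.init}) (x := 0) (ts := ts)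
  rwa [Set.singleton_prod_singleton] at h

end UniformlyPeriodic

end EOCA

theorem stmt11_general {α : Type u} {Q : Type v} [Finite Q] (A : EOCA Q α) :
    ∃ (Q' : Type v) (_ : Fintype Q') (A' : OCA Q' α),
      A'.Deterministic ∧
      A'.Loca = A.Loca ∧ A'.Lvis = A.Lvis ∧ A'.Lobs = A.Lobs := by
  obtain ⟨t, d, hd, hA⟩ := A.exists_uniformlyPeriodic
  have : NeZero d := ⟨by omega⟩
  have hacc : (A.determinize t d).AccTrace = A.AccTrace := hA.accTrace_determinize
  refine ⟨Set Q × ZMod d × Fin (t + 1), Fintype.ofFinite _, A.determinize t d,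
    OCA.ofFun_deterministic, ?_, ?_, ?_⟩
  · simp only [OCA.Loca, EOCA.Loca, hacc]
  · simp only [OCA.Lvis, EOCA.Lvis, hacc]
  · simp only [OCA.Lobs, EOCA.Lobs, hacc]

/-- every eOCA can be transformed into a deterministic OCA with
the same classical, visibly and observability semantics. -/
theorem stmt11 {α Q : Type} [Fintype α] [Nonempty α] [Fintype Q] (A : EOCA Q α) :
    ∃ (Q' : Type) (_ : Fintype Q') (A' : OCA Q' α),
      A'.Deterministic ∧
      A'.Loca = A.Loca ∧ A'.Lvis = A.Lvis ∧ A'.Lobs = A.Lobs :=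
  stmt11_general A
end
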